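/- arXiv:2112.05064 — 13 statements merged into one kernel-verified Lean document; each statement's English description precedes it below -/
import Mathlib

section
/- For all integers m, i, n with 0 ≤ i ≤ m and n ≥ 0, the (n+1)-Stirling number of the first kind satisfies ⟦m+n+1, i+n+1⟧_{n+1} = Σ_{j=0}^{m-i} C(i+j, i) · ⟦m+1, i+j+1⟧ · n^j, where C(a,b) is a binomial coefficient. -/
/-- The `r`-Stirling numbers of the first kind `⟦n,k⟧_r`: `⟦r,r⟧_r = 1`,
`⟦n,k⟧_r = 0` if `n < r` or `k < r`, and
`⟦n,k⟧_r = (n-1)·⟦n-1,k⟧_r + ⟦n-1,k-1⟧_r` for `n > r`. -/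
def rStirling1 (r : ℕ) : ℕ → ℕ → ℕ
  | 0, k => if r = 0 ∧ k = 0 then 1 else 0
  | (n+1), k =>
    if n + 1 < r ∨ k < r then 0
    else if n + 1 = r then (if k = r then 1 else 0)
    else if k = 0 then 0
    else n * rStirling1 r n k + rStirling1 r n (k - 1)

/-- The (unsigned) Stirling numbers of the first kind. -/
def stirling1 : ℕ → ℕ → ℕ := rStirling1 0

open Polynomial in
/-- The polynomial `∏_{t<m} (X + (n+t+1))`. -/
noncomputable def shiftPoly (n m : ℕ) : Polynomial ℕ :=
  ∏ t ∈ Finset.range m, (X + C (n + t + 1))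

open Polynomial in
lemma shiftPoly_succ (n m : ℕ) :
    shiftPoly n (m + 1) = shiftPoly n m * (X + C (n + m + 1)) := by
  simp only [shiftPoly, Finset.prod_range_succ]

open Polynomial in
lemma shiftPoly_coeff_succ (n m i : ℕ) : (shiftPoly n (m + 1)).coeff i =
    (n + m + 1) * (shiftPoly n m).coeff i +
      (if i = 0 then 0 else (shiftPoly n m).coeff (i - 1)) := by
  rw [shiftPoly_succ, mul_add, coeff_add, coeff_mul_C]
  cases i with
  | zero => simp [mul_comm]
  | succ i => rw [coeff_mul_X]; simp; ring

lemma rStirling1_eq_coeff (n m : ℕ) : ∀ i : ℕ,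
    rStirling1 (n + 1) (m + n + 1) (i + n + 1) = (shiftPoly n m).coeff i := by
  induction m with
  | zero =>
    intro i
    rw [rStirling1]
    simp [shiftPoly, Polynomial.coeff_one]
  | succ m ih =>
    intro i
    rw [shiftPoly_coeff_succ, ← ih i, show m + 1 + n + 1 = (m + n + 1) + 1 by ring, rStirling1,
      if_neg (by omega), if_neg (by omega), if_neg (by omega)]
    cases i with
    | zero =>
      have : rStirling1 (n + 1) (m + n + 1) (0 + n + 1 - 1) = 0 := by
        rw [rStirling1, if_pos (by omega)]
      rw [this]; simp; left; ring
    | succ i =>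
      rw [show i + 1 + n + 1 - 1 = i + n + 1 by omega, ih i]
      simp; left; ring

lemma stirling1_eq_coeff (m : ℕ) : ∀ i : ℕ,
    stirling1 (m + 1) (i + 1) = (shiftPoly 0 m).coeff i := by
  induction m with
  | zero =>
    intro i
    simp [stirling1, rStirling1, shiftPoly, Polynomial.coeff_one]
  | succ m ih =>
    intro i
    rw [shiftPoly_coeff_succ, ← ih i]
    unfold stirling1 at ih ⊢
    rw [rStirling1, if_neg (by omega), if_neg (by omega), if_neg (by omega)]
    cases i with
    | zero =>
      have : rStirling1 0 (m + 1) (0 + 1 - 1) = 0 := by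
        rw [rStirling1]; simp
      rw [this]; simp
    | succ i =>
      rw [show i + 1 + 1 - 1 = i + 1 by omega, ih i]
      simp

open Polynomial in
lemma shiftPoly_eq_taylor (n m : ℕ) : shiftPoly n m = taylor n (shiftPoly 0 m) := by
  induction m with
  | zero => simp [shiftPoly]
  | succ m ih =>
    rw [shiftPoly_succ, shiftPoly_succ, taylor_mul, ← ih, (taylor n).map_add X, taylor_X, taylor_C]
    simp only [map_add, C_0]
    ring

open Polynomial in
lemma shiftPoly_natDegree_le (n m : ℕ) : (shiftPoly n m).natDegree ≤ m := by
  induction m with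
  | zero => simp [shiftPoly]
  | succ m ih =>
    rw [shiftPoly_succ]
    exact natDegree_mul_le_of_le ih (natDegree_X_add_C _).le

theorem stmt0 (m i n : ℕ) (h : i ≤ m) :
    rStirling1 (n + 1) (m + n + 1) (i + n + 1) =
      ∑ j ∈ Finset.range (m - i + 1),
        (i + j).choose i * stirling1 (m + 1) (i + j + 1) * n ^ j := by
  rw [rStirling1_eq_coeff, shiftPoly_eq_taylor, Polynomial.taylor_coeff,
    Polynomial.eval_eq_sum_range' (n := m - i + 1)]
  · refine Finset.sum_congr rfl fun j _ => ?_
    rw [Polynomial.hasseDeriv_coeff, stirling1_eq_coeff, add_comm j i]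
    simp
  · have h1 := Polynomial.natDegree_hasseDeriv_le (shiftPoly 0 m) i
    have h2 := shiftPoly_natDegree_le 0 m
    omega
end

section
/- For integers k ≥ 0, n ≥ 0, and m ≥ 1, the hyper-sum of powers of integers satisfies S_k^{(m)}(n) = (1/m!) · Σ_{i=0}^{m} (−1)^i · ⟦m+n+1, i+n+1⟧_{n+1} · S_{k+i}(n), where S_j(n) = S_j^{(0)}(n) is the ordinary power sum. -/
/-- The power sum `S_k(n) = 1^k + 2^k + ⋯ + n^k`. -/
def powerSum (k n : ℕ) : ℕ := ∑ i ∈ Finset.Icc 1 n, i ^ k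

/-- The hyper-sums of powers of integers: `hyperSum m k n = S_k^{(m)}(n)`. -/
def hyperSum : ℕ → ℕ → ℕ → ℕ
  | 0, k, n => powerSum k n
  | (m+1), k, n => ∑ j ∈ Finset.Icc 1 n, hyperSum m k j

theorem rs_zero_of_lt (r N k : ℕ) (h : k < r) : rStirling1 r N k = 0 := by
  cases N with
  | zero => simp [rStirling1]; omega
  | succ N => simp [rStirling1, h]

theorem rs_base (n k : ℕ) : rStirling1 (n+1) (n+1) k = if k = n+1 then 1 else 0 := by
  by_cases h : k < n + 1
  · rw [rs_zero_of_lt _ _ _ h, if_neg (by omega)]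
  · simp [rStirling1, h]

theorem rs_succ (n m i : ℕ) : rStirling1 (n+1) (m+1+n+1) (i+n+1)
    = (m+n+1) * rStirling1 (n+1) (m+n+1) (i+n+1) + rStirling1 (n+1) (m+n+1) (i+n) := by
  have e : m+1+n+1 = (m+n+1)+1 := by omega
  rw [e, rStirling1.eq_2, if_neg (by omega), if_neg (by omega), if_neg (by omega)]
  rfl

theorem rs_big (n m : ℕ) : ∀ i, m < i → rStirling1 (n+1) (m+n+1) (i+n+1) = 0 := by
  induction m with
  | zero => intro i hi; rw [Nat.zero_add, rs_base, if_neg (by omega)]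
  | succ m ih =>
    intro i hi
    obtain ⟨i, rfl⟩ : ∃ t, i = t + 1 := ⟨i - 1, by omega⟩
    rw [rs_succ, ih _ (by omega), show i+1+n = i+n+1 by omega, ih _ (by omega)]
    simp

theorem rs_poly (n m : ℕ) (x : ℚ) :
    ∑ i ∈ Finset.range (m+1), (rStirling1 (n+1) (m+n+1) (i+n+1) : ℚ) * x^i
      = ∏ l ∈ Finset.range m, (x + n + 1 + l) := by
  induction m with
  | zero => simp [rs_base]
  | succ m ih =>
    rw [Finset.prod_range_succ, ← ih]
    simp_rw [rs_succ, Nat.cast_add _ (rStirling1 _ _ _), Nat.cast_mul,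
      add_mul (_ * _) _ (x ^ _), Finset.sum_add_distrib]
    rw [Finset.sum_range_succ, rs_big n m (m+1) (by omega), Finset.sum_range_succ' _ (m+1)]
    rw [Nat.zero_add, rs_zero_of_lt (n+1) (m+n+1) n (by omega)]
    have : ∀ i, i+1+n = i+n+1 := fun i => by omega
    simp_rw [this, mul_add, Finset.sum_mul]
    simp only [Nat.cast_zero, mul_zero, zero_mul, add_zero, ← Finset.sum_add_distrib]
    exact Finset.sum_congr rfl fun i _ => by push_cast; ring

theorem hyper_eq (k m : ℕ) : ∀ n, hyperSum m k n
    = ∑ j ∈ Finset.Icc 1 n, j^k * (n-j+m).choose m := by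
  induction m with
  | zero => intro n; simp [hyperSum, powerSum]
  | succ m ih =>
    intro n
    induction n with
    | zero => simp [hyperSum]
    | succ n ihn =>
      have h1 : hyperSum (m+1) k (n+1) = hyperSum (m+1) k n + hyperSum m k (n+1) := by
        simp only [hyperSum]
        rw [Finset.sum_Icc_succ_top (by omega)]
      rw [h1, ihn, ih, Finset.sum_Icc_succ_top (by omega), Finset.sum_Icc_succ_top (by omega),
        ← add_assoc, ← Finset.sum_add_distrib]
      congr 1
      · refine Finset.sum_congr rfl fun j hj => ?_
        rw [Finset.mem_Icc] at hj
        obtain ⟨d, rfl⟩ := Nat.exists_eq_add_of_le hj.2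
        rw [show j+d-j = d by omega, show j+d+1-j = d+1 by omega,
          show d+1+(m+1) = (d+1+m)+1 by omega, Nat.choose_succ_succ,
          show d+(m+1) = d+1+m by omega]
        ring
      · simp

theorem prod_choose (d m : ℕ) :
    ∏ l ∈ Finset.range m, ((d:ℚ) + 1 + l) = m.factorial * ((d+m).choose m : ℕ) := by
  rw [← Nat.cast_mul, ← Nat.ascFactorial_eq_factorial_mul_choose]
  induction m with
  | zero => simp
  | succ m ih =>
    rw [Finset.prod_range_succ, ih, Nat.ascFactorial_succ]
    push_cast; ring

theorem stmt1 (k n m : ℕ) (hm : 1 ≤ m) :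
    (hyperSum m k n : ℚ) =
      (1 / m.factorial) * ∑ i ∈ Finset.range (m + 1),
        (-1 : ℚ) ^ i * rStirling1 (n + 1) (m + n + 1) (i + n + 1) * powerSum (k + i) n := by
  have hf : (m.factorial : ℚ) ≠ 0 := by exact_mod_cast m.factorial_ne_zero
  rw [one_div, eq_inv_mul_iff_mul_eq₀ hf, hyper_eq]
  simp only [powerSum]
  push_cast
  simp_rw [Finset.mul_sum]
  rw [Finset.sum_comm]
  refine Finset.sum_congr rfl fun j hj => ?_
  rw [Finset.mem_Icc] at hj
  have h := rs_poly n m (-(j:ℚ))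
  have h2 := prod_choose (n-j) m
  have h3 : ((n-j : ℕ):ℚ) = -(j:ℚ) + n := by rw [Nat.cast_sub hj.2]; ring
  rw [h3, ← h] at h2
  rw [mul_left_comm, ← h2, Finset.mul_sum]
  refine Finset.sum_congr rfl fun i _ => ?_
  rw [neg_pow (j:ℚ) i, pow_add]; ring
end

section
/- For all integers m ≥ 0 and n ≥ 0, Σ_{i=0}^{m} (−1)^i · ⟦m+n+1, i+n+1⟧_{n+1} · S_i(n) = m! · C(n+m, m+1), where S_i(n) = 1^i + 2^i + ⋯ + n^i is the power sum and C(a,b) is a binomial coefficient. -/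
theorem rS_low (n N k : ℕ) (h : k < n + 1) : rStirling1 (n + 1) N k = 0 := by
  cases N with
  | zero => simp [rStirling1]
  | succ N => rw [rStirling1, if_pos (Or.inr h)]

theorem rS_base (n k : ℕ) : rStirling1 (n + 1) (n + 1) k = if k = n + 1 then 1 else 0 := by
  rw [rStirling1]
  split_ifs <;> first | rfl | omega

theorem rS_succ (n m i : ℕ) : rStirling1 (n + 1) (m + 1 + n + 1) (i + n + 1) =
    (m + n + 1) * rStirling1 (n + 1) (m + n + 1) (i + n + 1)
      + rStirling1 (n + 1) (m + n + 1) (i + n) := by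
  have e : m + 1 + n = m + n + 1 := by omega
  rw [e, rStirling1.eq_2 (n + 1) (i + n + 1) (m + n + 1), if_neg (by omega), if_neg (by omega),
    if_neg (by omega)]
  rfl

theorem rS_high (n m : ℕ) : ∀ i, m < i → rStirling1 (n + 1) (m + n + 1) (i + n + 1) = 0 := by
  induction m with
  | zero => intro i hi; rw [Nat.zero_add, rS_base, if_neg (by omega)]
  | succ m ih =>
    intro i hi
    obtain ⟨j, rfl⟩ : ∃ j, i = j + 1 := ⟨i - 1, by omega⟩
    rw [rS_succ, ih _ (by omega), show j + 1 + n = j + n + 1 by omega, ih _ (by omega)]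
    rfl

theorem rS_gen (n m : ℕ) (x : ℤ) :
    ∑ i ∈ Finset.range (m + 1), x ^ i * (rStirling1 (n + 1) (m + n + 1) (i + n + 1) : ℤ) =
      ∏ j ∈ Finset.range m, (x + n + 1 + j) := by
  induction m with
  | zero => simp [rS_base]
  | succ m ih =>
    rw [Finset.prod_range_succ, ← ih]
    simp only [rS_succ]
    push_cast
    simp only [mul_add, Finset.sum_add_distrib]
    have h1 : ∑ i ∈ Finset.range (m + 1 + 1),
        x ^ i * (((m : ℤ) + n + 1) * (rStirling1 (n + 1) (m + n + 1) (i + n + 1) : ℤ)) =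
        (m + n + 1) * ∑ i ∈ Finset.range (m + 1),
          x ^ i * (rStirling1 (n + 1) (m + n + 1) (i + n + 1) : ℤ) := by
      rw [Finset.sum_range_succ, rS_high n m (m + 1) (by omega), Finset.mul_sum]
      simp only [Nat.cast_zero, mul_zero, add_zero]
      exact Finset.sum_congr rfl fun i _ => by ring
    have h2 : ∑ i ∈ Finset.range (m + 1 + 1),
        x ^ i * (rStirling1 (n + 1) (m + n + 1) (i + n) : ℤ) =
        x * ∑ i ∈ Finset.range (m + 1),
          x ^ i * (rStirling1 (n + 1) (m + n + 1) (i + n + 1) : ℤ) := by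
      rw [Finset.sum_range_succ', rS_low n _ (0 + n) (by omega), Finset.mul_sum]
      simp only [Nat.cast_zero, mul_zero, add_zero]
      exact Finset.sum_congr rfl fun i _ => by
        rw [show i + 1 + n = i + n + 1 by omega]; ring
    rw [h1, h2]
    ring

theorem sum_asc (m n : ℕ) : ∑ t ∈ Finset.range n, (t + 1).ascFactorial m =
    m.factorial * (n + m).choose (m + 1) := by
  induction n with
  | zero => simp
  | succ n ih =>
    rw [Finset.sum_range_succ, ih, Nat.ascFactorial_eq_factorial_mul_choose,
      show n + 1 + m = n + m + 1 by omega, Nat.choose_succ_succ]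
    ring

theorem stmt2 (m n : ℕ) :
    ∑ i ∈ Finset.range (m + 1),
        (-1 : ℤ) ^ i * rStirling1 (n + 1) (m + n + 1) (i + n + 1) * powerSum i n =
      m.factorial * (n + m).choose (m + 1) := by
  have hp : ∀ n i, (powerSum i n : ℤ) = ∑ k ∈ Finset.range n, ((k : ℤ) + 1) ^ i := by
    intro n i
    induction n with
    | zero => simp [powerSum]
    | succ n ih =>
      rw [Finset.sum_range_succ, ← ih, powerSum, powerSum,
        Finset.sum_Icc_succ_top (by omega)]
      push_cast
      rfl
  simp only [hp, Finset.mul_sum]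
  rw [Finset.sum_comm]
  have h : ∀ k ∈ Finset.range n, ∑ i ∈ Finset.range (m + 1),
      (-1 : ℤ) ^ i * rStirling1 (n + 1) (m + n + 1) (i + n + 1) * ((k : ℤ) + 1) ^ i =
      (((n - 1 - k) + 1).ascFactorial m : ℕ) := by
    intro k hk
    have hk := Finset.mem_range.mp hk
    rw [Nat.ascFactorial_eq_prod_range]
    push_cast
    have e : ((n - 1 - k : ℕ) : ℤ) = n - 1 - k := by omega
    rw [e]
    have g := rS_gen n m (-((k : ℤ) + 1))
    refine Eq.trans (Finset.sum_congr rfl fun i _ => ?_)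
      (g.trans (Finset.prod_congr rfl fun j _ => by ring))
    rw [neg_pow ((k : ℤ) + 1)]
    ring
  rw [Finset.sum_congr rfl h,
    Finset.sum_range_reflect (fun t => (((t + 1).ascFactorial m : ℕ) : ℤ)) n]
  exact_mod_cast sum_asc m n
end

section
/- For all integers m, i with 0 ≤ i ≤ m, Σ_{j=0}^{m−i} (−1)^j · C(i+j, i) · ⟦m+1, i+j+1⟧ = ⟦m, i⟧, where C(a,b) is a binomial coefficient. -/
theorem st_succ (n k : ℕ) :
    stirling1 (n + 1) (k + 1) = n * stirling1 n (k + 1) + stirling1 n k := by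
  simp [stirling1, rStirling1]

theorem st_succ_zero (n : ℕ) : stirling1 (n + 1) 0 = 0 := by
  simp [stirling1, rStirling1]

theorem st_zero (k : ℕ) : stirling1 0 k = if k = 0 then 1 else 0 := by
  simp [stirling1, rStirling1]

theorem st_aux (m : ℕ) : ∀ i N : ℕ, m + 1 ≤ N →
    ∑ k ∈ Finset.range N, (-1 : ℤ) ^ (k + i) * k.choose i * stirling1 (m + 1) (k + 1) =
      stirling1 m i := by
  induction m with
  | zero =>
    intro i N hN
    obtain ⟨N, rfl⟩ : ∃ M, N = M + 1 := ⟨N - 1, by omega⟩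
    rw [Finset.sum_range_succ', Finset.sum_eq_zero]
    · rcases i with _ | i <;> simp [st_succ, st_zero]
    · intro k _
      simp [st_succ, st_zero]
  | succ m ih =>
    intro i N hN
    obtain ⟨N, rfl⟩ : ∃ M, N = M + 1 := ⟨N - 1, by omega⟩
    have key : ∑ k ∈ Finset.range (N + 1),
        (-1 : ℤ) ^ (k + i) * k.choose i * stirling1 (m + 2) (k + 1) =
        (m + 1) * ∑ k ∈ Finset.range (N + 1),
          (-1 : ℤ) ^ (k + i) * k.choose i * stirling1 (m + 1) (k + 1) +
        ∑ k ∈ Finset.range N,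
          (-1 : ℤ) ^ (k + 1 + i) * (k + 1).choose i * stirling1 (m + 1) (k + 1) := by
      have h0 := Finset.sum_range_succ'
        (fun k => (-1 : ℤ) ^ (k + i) * k.choose i * stirling1 (m + 1) k) N
      simp only [st_succ_zero, Nat.cast_zero, mul_zero, add_zero] at h0
      rw [← h0, Finset.mul_sum, ← Finset.sum_add_distrib]
      refine Finset.sum_congr rfl fun k _ => ?_
      rw [st_succ (m + 1) k]
      push_cast
      ring
    rw [key, ih i (N + 1) (by omega)]
    rcases i with _ | i
    · have h1 := ih 0 N (by omega)
      have h2 : ∑ k ∈ Finset.range N,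
          (-1 : ℤ) ^ (k + 1 + 0) * (k + 1).choose 0 * stirling1 (m + 1) (k + 1) =
          - stirling1 m 0 := by
        rw [← h1, ← Finset.sum_neg_distrib]
        refine Finset.sum_congr rfl fun k _ => ?_
        simp [pow_succ]
      rw [h2, st_succ_zero]
      rcases m with _ | m
      · simp
      · simp [st_succ_zero]
    · have h1 := ih i N (by omega)
      have h2 := ih (i + 1) N (by omega)
      have h3 : ∑ k ∈ Finset.range N,
          (-1 : ℤ) ^ (k + 1 + (i + 1)) * (k + 1).choose (i + 1) * stirling1 (m + 1) (k + 1) =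
          stirling1 m i - stirling1 m (i + 1) := by
        rw [← h1, ← h2, ← Finset.sum_sub_distrib]
        refine Finset.sum_congr rfl fun k _ => ?_
        rw [Nat.choose_succ_succ]
        push_cast
        ring
      rw [h3, st_succ m i]
      push_cast
      ring

theorem stmt3 (m i : ℕ) (h : i ≤ m) :
    ∑ j ∈ Finset.range (m - i + 1),
        (-1 : ℤ) ^ j * (i + j).choose i * stirling1 (m + 1) (i + j + 1) =
      stirling1 m i := by
  have H := st_aux m i (i + (m - i + 1)) (by omega)
  rw [Finset.sum_range_add, Finset.sum_eq_zero, zero_add] at H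
  · rw [← H]
    refine Finset.sum_congr rfl fun j _ => ?_
    have : (-1 : ℤ) ^ (i + j + i) = (-1) ^ j := by
      rw [show i + j + i = 2 * i + j by ring, pow_add, pow_mul]
      simp
    rw [this]
  · intro k hk
    simp [Nat.choose_eq_zero_of_lt (Finset.mem_range.mp hk)]
end

section
/- For all integers m, i with 0 ≤ i ≤ m and every real number x, Σ_{j=0}^{m−i} C(i+j, i) · ⟦m+1, i+j+1⟧ · x^j = Σ_{j=0}^{m−i} C(i+j, i) · ⟦m, i+j⟧ · (x+1)^j, where C(a,b) is a binomial coefficient. -/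
open Polynomial in
theorem ascPochhammer_coeff_stirling1 (n k : ℕ) :
    (ascPochhammer ℝ n).coeff k = (stirling1 n k : ℝ) := by
  induction n generalizing k with
  | zero => simp [stirling1, rStirling1, coeff_one]
  | succ n ih =>
    rw [ascPochhammer_succ_right, mul_add, coeff_add, ← C_eq_natCast, coeff_mul_C, ih]
    cases k with
    | zero =>
      have h0 : ∀ n : ℕ, n * stirling1 n 0 = 0 := by
        intro n
        cases n <;> simp [stirling1, rStirling1]
      have h1 : (n : ℝ) * (stirling1 n 0 : ℝ) = 0 := by exact_mod_cast h0 n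
      rw [mul_coeff_zero, coeff_X_zero, mul_comm (stirling1 n 0 : ℝ), h1]
      simp [stirling1, rStirling1]
    | succ k =>
      rw [coeff_mul_X, ih]
      have : stirling1 (n + 1) (k + 1) = n * stirling1 n (k + 1) + stirling1 n k := by
        simp [stirling1, rStirling1]
      rw [this]; push_cast; ring

open Polynomial in
theorem hasse_eval_sum (p : ℝ[X]) (m i : ℕ) (hp : p.natDegree ≤ m) (x : ℝ) :
    (hasseDeriv i p).eval x =
      ∑ j ∈ Finset.range (m - i + 1), ((i + j).choose i : ℝ) * p.coeff (i + j) * x ^ j := by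
  have hd : (hasseDeriv i p).natDegree < m - i + 1 := by
    have := natDegree_hasseDeriv_le p i
    omega
  rw [eval_eq_sum_range' hd]
  refine Finset.sum_congr rfl fun j _ => ?_
  rw [hasseDeriv_coeff, add_comm j i]

open Polynomial in
theorem stmt4 (m i : ℕ) (h : i ≤ m) (x : ℝ) :
    ∑ j ∈ Finset.range (m - i + 1),
        ((i + j).choose i : ℝ) * stirling1 (m + 1) (i + j + 1) * x ^ j =
      ∑ j ∈ Finset.range (m - i + 1),
        ((i + j).choose i : ℝ) * stirling1 m (i + j) * (x + 1) ^ j := by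
  have hdeg : (ascPochhammer ℝ m).natDegree ≤ m := (ascPochhammer_natDegree ℝ m).le
  have hQ : ∀ k, (taylor 1 (ascPochhammer ℝ m)).coeff k = (stirling1 (m + 1) (k + 1) : ℝ) := by
    intro k
    rw [← ascPochhammer_coeff_stirling1, ascPochhammer_succ_left, coeff_X_mul, taylor_apply, C_1]
  have h1 := hasse_eval_sum (taylor 1 (ascPochhammer ℝ m)) m i (by rwa [natDegree_taylor]) x
  have h2 := hasse_eval_sum (ascPochhammer ℝ m) m i hdeg (x + 1)
  simp only [hQ] at h1
  simp only [ascPochhammer_coeff_stirling1] at h2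
  rw [← h1, ← h2, ← taylor_coeff, ← taylor_coeff, taylor_taylor]
end

section
/- For all integers j ≥ 0 and n ≥ 0, the hyperharmonic number of order n satisfies H_{j+1}^{(n)} = (1/(j+1)!) · Σ_{i=0}^{j} (i+1) · ⟦j+1, i+1⟧ · n^i. -/
/-- Hyperharmonic numbers: `hyperharmonic r n = H_n^{(r)}`. -/
def hyperharmonic : ℕ → ℕ → ℚ
  | 0, n => if n = 0 then 0 else 1 / (n : ℚ)
  | (r+1), n => ∑ i ∈ Finset.Icc 1 n, hyperharmonic r i

open Polynomial in
theorem coeff_asc_aux (m k : ℕ) : (ascPochhammer ℚ m).coeff k = stirling1 m k := by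
  unfold stirling1
  induction m generalizing k with
  | zero => simp [rStirling1, coeff_one]
  | succ m ih =>
    rw [ascPochhammer_succ_right, mul_add, coeff_add, ← C_eq_natCast, coeff_mul_C, ih]
    cases k with
    | zero =>
      cases m with
      | zero => simp [rStirling1]
      | succ m => simp [rStirling1]
    | succ k =>
      rw [coeff_mul_X, ih]
      simp [rStirling1]
      ring

open Polynomial in
theorem asc_rec_aux (m : ℕ) (x : ℚ) :
    (derivative (ascPochhammer ℚ (m + 1))).eval (x + 1) =
      (derivative (ascPochhammer ℚ (m + 1))).eval x +
        (m + 1) * (derivative (ascPochhammer ℚ m)).eval (x + 1) := by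
  have h := congrArg (fun p => (derivative p).eval x) (ascPochhammer_succ_comp_X_add_one (S := ℚ) m)
  simpa [derivative_comp, eval_comp] using h

open Polynomial in
theorem hyper_aux (n m : ℕ) :
    hyperharmonic n m = (derivative (ascPochhammer ℚ m)).eval (n : ℚ) / m.factorial := by
  induction n generalizing m with
  | zero =>
    cases m with
    | zero => simp [hyperharmonic]
    | succ m =>
      rw [ascPochhammer_succ_left]
      have : (m.factorial : ℚ) ≠ 0 := by positivity
      simp [hyperharmonic, eval_comp, ascPochhammer_eval_one, Nat.factorial_succ]
      field_simp
  | succ n ih =>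
    induction m with
    | zero => simp [hyperharmonic]
    | succ m ihm =>
      have h : hyperharmonic (n + 1) (m + 1) =
          hyperharmonic (n + 1) m + hyperharmonic n (m + 1) := by
        simp only [hyperharmonic]
        rw [Finset.sum_Icc_succ_top (by omega)]
      rw [h, ihm, ih]
      have : (m.factorial : ℚ) ≠ 0 := by positivity
      push_cast [Nat.factorial_succ]
      rw [asc_rec_aux]
      field_simp
      ring

theorem stmt5 (j n : ℕ) :
    hyperharmonic n (j + 1) =
      (1 / (j + 1).factorial) * ∑ i ∈ Finset.range (j + 1),
        (i + 1) * stirling1 (j + 1) (i + 1) * (n : ℚ) ^ i := by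
  rw [hyper_aux, Polynomial.eval_eq_sum_range' (n := j + 1), div_eq_inv_mul, one_div]
  · congr 1
    refine Finset.sum_congr rfl fun i _ => ?_
    rw [Polynomial.coeff_derivative, coeff_asc_aux]
    ring
  · have := Polynomial.natDegree_derivative_lt (p := ascPochhammer ℚ (j + 1))
      (by rw [ascPochhammer_natDegree]; omega)
    rwa [ascPochhammer_natDegree] at this
end

section
/- Fix integers j ≥ 0 and 0 ≤ i ≤ j, and let H(x) = (1/(j+1)!) · d/dx [x(x+1)(x+2)⋯(x+j)] be the derivative of the rising-factorial polynomial divided by (j+1)!. Then the i-th derivative of H satisfies, for all real x, d^i/dx^i H(x) = ((i+1)!/(j+1)!) · Σ_{t=0}^{j−i} C(i+t+1, i+1) · ⟦j+1, i+t+1⟧ · x^t, where C(a,b) is a binomial coefficient. -/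
open Polynomial in
theorem coeff_rising (n k : ℕ) :
    (∏ t ∈ Finset.range n, ((X : ℝ[X]) + (t : ℝ[X]))).coeff k = (stirling1 n k : ℝ) := by
  induction n generalizing k with
  | zero =>
    simp [stirling1, rStirling1, coeff_one]
  | succ n ih =>
    rw [Finset.prod_range_succ, mul_add, coeff_add, ← C_eq_natCast, coeff_mul_C, ih]
    cases k with
    | zero =>
      cases n with
      | zero => simp [stirling1, rStirling1]
      | succ n => simp [stirling1, rStirling1]
    | succ k =>
      rw [coeff_mul_X, ih]
      simp [stirling1, rStirling1]
      ring

open Polynomial in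
theorem natDegree_rising (n : ℕ) :
    (∏ t ∈ Finset.range n, ((X : ℝ[X]) + (t : ℝ[X]))).natDegree ≤ n := by
  refine (natDegree_prod_le _ _).trans ?_
  refine (Finset.sum_le_card_nsmul _ _ 1 ?_).trans (by simp)
  intro t _
  rw [← C_eq_natCast]
  exact (natDegree_X_add_C _).le

open Polynomial in
theorem iteratedDeriv_poly (p : ℝ[X]) (i : ℕ) :
    iteratedDeriv i (fun x => p.eval x) = fun x => (derivative^[i] p).eval x := by
  induction i with
  | zero => simp
  | succ i ih =>
    rw [iteratedDeriv_succ, ih, Function.iterate_succ_apply']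
    funext x
    exact Polynomial.deriv _

theorem stmt6 (j i : ℕ) (h : i ≤ j) (H : ℝ → ℝ)
    (hH : H = fun x : ℝ =>
      (1 / (j + 1).factorial) * deriv (fun y : ℝ => ∏ t ∈ Finset.range (j + 1), (y + t)) x) :
    ∀ x : ℝ, iteratedDeriv i H x =
      ((i + 1).factorial / (j + 1).factorial) *
        ∑ t ∈ Finset.range (j - i + 1),
          ((i + t + 1).choose (i + 1) : ℝ) * stirling1 (j + 1) (i + t + 1) * x ^ t := by
  intro x
  set P : Polynomial ℝ :=
    ∏ t ∈ Finset.range (j + 1), ((Polynomial.X : Polynomial ℝ) + (t : Polynomial ℝ)) with hP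
  have h1 : (fun y : ℝ => ∏ t ∈ Finset.range (j + 1), (y + t)) = fun y => P.eval y := by
    funext y
    simp [hP, Polynomial.eval_prod]
  have h2 : H = fun x => (Polynomial.C (1 / ((j + 1).factorial : ℝ)) *
      Polynomial.derivative P).eval x := by
    rw [hH, h1]
    funext x
    rw [Polynomial.deriv, Polynomial.eval_C_mul]
  have hd : (Polynomial.derivative^[i + 1] P).natDegree < j - i + 1 := by
    have a := Polynomial.natDegree_iterate_derivative P (i + 1)
    have b := natDegree_rising (j + 1)
    rw [← hP] at b
    omega
  rw [h2, iteratedDeriv_poly]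
  simp only []
  rw [Polynomial.iterate_derivative_C_mul, ← Function.iterate_succ_apply, Polynomial.eval_C_mul,
    Polynomial.eval_eq_sum_range' hd, Finset.mul_sum, Finset.mul_sum]
  refine Finset.sum_congr rfl fun t _ => ?_
  rw [Polynomial.coeff_iterate_derivative, hP, coeff_rising, Nat.descFactorial_eq_factorial_mul_choose,
    show t + (i + 1) = i + t + 1 by ring, nsmul_eq_mul]
  push_cast
  ring
end

section
/- For all integers i, j, r with 0 ≤ i ≤ j and r ≥ 0, Σ_{t=0}^{j} (1/(t! · (j+1−t))) · ⟦t+r, i+r⟧_r = ((i+1)/(j+1)!) · ⟦j+r+1, i+r+1⟧_r, as an identity of rational numbers. -/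
open PowerSeries in
theorem ode_iff (r : ℕ) (F G : PowerSeries ℚ) :
    (derivative ℚ F = X * derivative ℚ F + (r : PowerSeries ℚ) * F + G) ↔
    ∀ n : ℕ, ((n : ℚ) + 1) * coeff (n + 1) F = (n + r) * coeff n F + coeff n G := by
  have hc : (r : PowerSeries ℚ) = C (r : ℚ) := by simp
  rw [PowerSeries.ext_iff, hc]
  refine forall_congr' fun n => ?_
  have hX : coeff n (X * derivative ℚ F) = n * coeff n F := by
    cases n with
    | zero => simp
    | succ m => rw [coeff_succ_X_mul, coeff_derivative]; push_cast; ring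
  rw [map_add, map_add, hX, coeff_C_mul, coeff_derivative]
  constructor <;> intro h <;> linarith

theorem a_zero (r k : ℕ) : rStirling1 r r (k + r) = if k = 0 then 1 else 0 := by
  cases r with
  | zero => simp [rStirling1]
  | succ r => simp [rStirling1]; omega

theorem a_succ_succ (r t k : ℕ) : rStirling1 r (t + 1 + r) (k + 1 + r) =
    (t + r) * rStirling1 r (t + r) (k + 1 + r) + rStirling1 r (t + r) (k + r) := by
  have e : t + 1 + r = (t + r) + 1 := by ring
  rw [e, rStirling1, if_neg (by omega), if_neg (by omega), if_neg (by omega)]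
  congr 2
  omega

theorem a_low (r n k : ℕ) (h : k < r) : rStirling1 r n k = 0 := by
  cases n with
  | zero => rw [rStirling1, if_neg (by omega)]
  | succ n => rw [rStirling1, if_pos (by omega)]

theorem a_succ_zero (r t : ℕ) : rStirling1 r (t + 1 + r) r =
    (t + r) * rStirling1 r (t + r) r := by
  have e : t + 1 + r = (t + r) + 1 := by ring
  rw [e, rStirling1, if_neg (by omega), if_neg (by omega)]
  by_cases hr : r = 0
  · subst hr
    cases t <;> simp [rStirling1]
  · rw [if_neg hr, a_low r _ (r - 1) (by omega), add_zero]

/-- Exponential generating function of a column. -/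
def egf (r k : ℕ) : PowerSeries ℚ :=
  PowerSeries.mk fun t => (rStirling1 r (t + r) (k + r) : ℚ) / t.factorial

/-- The series of `-log (1 - x)`. -/
def logSer : PowerSeries ℚ := PowerSeries.mk fun t => 1 / (t : ℚ)

open PowerSeries in
theorem egf_zero_ode (r : ℕ) : derivative ℚ (egf r 0) =
    X * derivative ℚ (egf r 0) + (r : PowerSeries ℚ) * egf r 0 + 0 := by
  rw [ode_iff]
  intro n
  have hn : (n.factorial : ℚ) ≠ 0 := by exact_mod_cast n.factorial_ne_zero
  simp only [egf, coeff_mk, zero_add, a_succ_zero, Nat.factorial_succ, map_zero]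
  push_cast
  field_simp
  ring

open PowerSeries in
theorem egf_succ_ode (r k : ℕ) : derivative ℚ (egf r (k + 1)) =
    X * derivative ℚ (egf r (k + 1)) + (r : PowerSeries ℚ) * egf r (k + 1) + egf r k := by
  rw [ode_iff]
  intro n
  have hn : (n.factorial : ℚ) ≠ 0 := by exact_mod_cast n.factorial_ne_zero
  simp only [egf, coeff_mk, a_succ_succ, Nat.factorial_succ]
  push_cast
  field_simp

open PowerSeries in
theorem logSer_ode : derivative ℚ logSer = X * derivative ℚ logSer + 1 := by
  have := (ode_iff 0 logSer 1).2 (by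
    intro n
    simp only [logSer, coeff_mk, coeff_one]
    cases n with
    | zero => simp
    | succ m => push_cast; field_simp; simp)
  simpa using this

open PowerSeries in
theorem ode_unique (r : ℕ) (F F' G : PowerSeries ℚ) (h0 : coeff 0 F = coeff 0 F')
    (h : derivative ℚ F = X * derivative ℚ F + (r : PowerSeries ℚ) * F + G)
    (h' : derivative ℚ F' = X * derivative ℚ F' + (r : PowerSeries ℚ) * F' + G) : F = F' := by
  rw [ode_iff] at h h'
  ext n
  induction n with
  | zero => exact h0
  | succ n ih =>
    have h1 := h n
    rw [ih, ← h' n] at h1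
    exact mul_left_cancel₀ (by positivity) h1

open PowerSeries in
theorem egf_mul_log (r k : ℕ) : egf r k * logSer = ((k : PowerSeries ℚ) + 1) * egf r (k + 1) := by
  have hd : ∀ m : ℕ, derivative ℚ (((m : PowerSeries ℚ) + 1) * egf r (m + 1)) =
      ((m : PowerSeries ℚ) + 1) * derivative ℚ (egf r (m + 1)) := by
    intro m
    have e : ((m : PowerSeries ℚ) + 1) = C ((m : ℚ) + 1) := by simp
    ext n
    rw [e, coeff_derivative, coeff_C_mul, coeff_C_mul, coeff_derivative]
    ring
  have hm : derivative ℚ (egf r k * logSer) =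
      egf r k * derivative ℚ logSer + logSer * derivative ℚ (egf r k) := by
    rw [Derivation.leibniz]; simp [smul_eq_mul]
  have h0 : coeff 0 (egf r k * logSer) =
      coeff 0 (((k : PowerSeries ℚ) + 1) * egf r (k + 1)) := by
    have e1 : coeff 0 logSer = 0 := by simp [logSer]
    have e2 : coeff 0 (egf r (k + 1)) = 0 := by
      simp only [egf, coeff_mk, zero_add, a_zero]; simp
    rw [coeff_zero_eq_constantCoeff_apply] at e1 e2 ⊢
    rw [coeff_zero_eq_constantCoeff_apply, map_mul, map_mul, e1, e2]; simp
  refine ode_unique r _ _ (((k : PowerSeries ℚ) + 1) * egf r k) h0 ?_ ?_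
  · rw [hm]
    have hl := logSer_ode
    cases k with
    | zero =>
      have he := egf_zero_ode r
      push_cast
      linear_combination egf r 0 * hl + logSer * he
    | succ k =>
      have he := egf_succ_ode r k
      have ih := egf_mul_log r k
      push_cast
      linear_combination egf r (k + 1) * hl + logSer * he + ih
  · rw [hd]
    linear_combination ((k : PowerSeries ℚ) + 1) * egf_succ_ode r k

theorem stmt7 (i j r : ℕ) (h : i ≤ j) :
    ∑ t ∈ Finset.range (j + 1),
        (1 / (t.factorial * (j + 1 - t)) : ℚ) * rStirling1 r (t + r) (i + r) =
      ((i + 1) / (j + 1).factorial) * rStirling1 r (j + r + 1) (i + r + 1) := by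
  have hk := congrArg (PowerSeries.coeff (j + 1)) (egf_mul_log r i)
  have e : ((i : PowerSeries ℚ) + 1) = PowerSeries.C ((i : ℚ) + 1) := by simp
  rw [e, PowerSeries.coeff_C_mul, PowerSeries.coeff_mul,
    Finset.Nat.sum_antidiagonal_eq_sum_range_succ_mk, Finset.sum_range_succ] at hk
  simp only [egf, logSer, PowerSeries.coeff_mk, Nat.sub_self, Nat.cast_zero, div_zero, mul_zero,
    add_zero] at hk
  rw [show j + r + 1 = j + 1 + r by ring, show i + r + 1 = i + 1 + r by ring]
  rw [div_mul_eq_mul_div, ← mul_div_assoc'] 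
  refine Eq.trans (Finset.sum_congr rfl fun t ht => ?_) hk
  have ht' : t ≤ j + 1 := by have := Finset.mem_range.1 ht; omega
  rw [Nat.cast_sub ht']
  push_cast
  rw [one_div, mul_inv]
  ring
end

section
/- For all integers m, i, r with 0 ≤ i ≤ m and r ≥ 0, Σ_{k=0}^{m} ((−1)^k/k!) · C(r+1, m−k) · ⟦k+r+1, i+r+1⟧_{r+1} = ((−1)^m/m!) · ⟦m, i⟧, as an identity of rational numbers, where C(a,b) is a binomial coefficient. -/
lemma rS_zero (s i : ℕ) : rStirling1 s s (i + s) = if i = 0 then 1 else 0 := by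
  cases s with
  | zero => simp [rStirling1]
  | succ s => simp [rStirling1]; omega

lemma rS_succ_succ (s k i : ℕ) : rStirling1 s (k + 1 + s) (i + 1 + s) =
    (k + s) * rStirling1 s (k + s) (i + 1 + s) + rStirling1 s (k + s) (i + s) := by
  have e : k + 1 + s = (k + s) + 1 := by omega
  rw [e, rStirling1, if_neg (by omega), if_neg (by omega), if_neg (by omega)]
  have e2 : i + 1 + s - 1 = i + s := by omega
  rw [e2]

lemma rS_lt (s n k : ℕ) (h : k < s) : rStirling1 s n k = 0 := by
  cases n with
  | zero => rw [rStirling1, if_neg (by omega)]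
  | succ n => rw [rStirling1, if_pos (by omega)]

lemma rS0 (k : ℕ) : rStirling1 0 (k + 1) 0 = 0 := by
  simp [rStirling1]

lemma rS_succ_zero (s k : ℕ) : rStirling1 s (k + 1 + s) (0 + s) =
    (k + s) * rStirling1 s (k + s) (0 + s) := by
  cases s with
  | zero =>
    cases k with
    | zero => simp [rStirling1]
    | succ k => simp [rS0]
  | succ s =>
    have e : k + 1 + (s + 1) = (k + (s + 1)) + 1 := by omega
    rw [e, rStirling1, if_neg (by omega), if_neg (by omega), if_neg (by omega),
      rS_lt _ _ (0 + (s + 1) - 1) (by omega), add_zero]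

lemma rS_key (s k : ℕ) : ∀ i, rStirling1 (s + 1) (k + 1 + (s + 1)) (i + (s + 1)) =
    (k + 1) * rStirling1 (s + 1) (k + (s + 1)) (i + (s + 1)) + rStirling1 s (k + 1 + s) (i + s) := by
  induction k with
  | zero =>
    intro i
    cases i with
    | zero =>
      rw [rS_succ_zero, rS_succ_zero]
      simp only [zero_add (s + 1), zero_add s]
      have h1 := rS_zero s 0
      have h2 := rS_zero (s + 1) 0
      simp only [zero_add, if_true] at h1 h2
      rw [h1, h2]; ring
    | succ i =>
      rw [rS_succ_succ, rS_succ_succ]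
      simp only [zero_add (s + 1), zero_add s, rS_zero]
      simp
  | succ k ih =>
    intro i
    cases i with
    | zero =>
      have h := ih 0
      have h1 := rS_succ_zero (s + 1) k
      rw [rS_succ_zero (s + 1) (k + 1), rS_succ_zero s (k + 1)]
      zify at *
      push_cast at *
      linear_combination (k + 1 + s : ℤ) * h - (k + 1 : ℤ) * h1
    | succ i =>
      have h := ih (i + 1)
      have h' := ih i
      have h1 := rS_succ_succ (s + 1) k i
      rw [rS_succ_succ (s + 1) (k + 1), rS_succ_succ s (k + 1)]
      zify at *
      push_cast at *
      linear_combination (k + 1 + s : ℤ) * h + h' - (k + 1 : ℤ) * h1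

/-- Generating series of the signed, normalised `s`-Stirling numbers. -/
noncomputable def rSgen (s i : ℕ) : PowerSeries ℚ :=
  PowerSeries.mk fun k => ((-1 : ℚ) ^ k / k.factorial) * rStirling1 s (k + s) (i + s)

lemma rSgen_succ (s i : ℕ) : (1 + PowerSeries.X) * rSgen (s + 1) i = rSgen s i := by
  ext k
  rw [add_mul, one_mul, map_add]
  cases k with
  | zero =>
    simp only [PowerSeries.coeff_zero_X_mul, rSgen, PowerSeries.coeff_mk, zero_add, rS_zero, add_zero]
  | succ k =>
    rw [PowerSeries.coeff_succ_X_mul]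
    simp only [rSgen, PowerSeries.coeff_mk]
    rw [rS_key, Nat.factorial_succ]
    have : (k.factorial : ℚ) ≠ 0 := by positivity
    have : (k + 1 : ℚ) ≠ 0 := by positivity
    push_cast
    field_simp
    ring

lemma rSgen_pow (s i : ℕ) : rSgen s i * (1 + PowerSeries.X) ^ s = rSgen 0 i := by
  induction s with
  | zero => simp
  | succ s ih => rw [← ih, ← rSgen_succ s]; ring

lemma coeff_one_add_X_pow' (s n : ℕ) :
    PowerSeries.coeff n ((1 + PowerSeries.X : PowerSeries ℚ) ^ s) = s.choose n := by
  have := Polynomial.coeff_one_add_X_pow ℚ s n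
  rw [← this, ← Polynomial.coeff_coe]
  simp

theorem stmt11 (m i r : ℕ) (h : i ≤ m) :
    ∑ k ∈ Finset.range (m + 1),
        ((-1 : ℚ) ^ k / k.factorial) * (r + 1).choose (m - k) *
          rStirling1 (r + 1) (k + r + 1) (i + r + 1) =
      ((-1 : ℚ) ^ m / m.factorial) * stirling1 m i := by
  have H := congrArg (PowerSeries.coeff m) (rSgen_pow (r + 1) i)
  rw [PowerSeries.coeff_mul, Finset.Nat.sum_antidiagonal_eq_sum_range_succ_mk] at H
  simp only [coeff_one_add_X_pow', rSgen, PowerSeries.coeff_mk, add_zero] at H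
  rw [stirling1, ← H]
  refine Finset.sum_congr rfl fun k _ => ?_
  rw [← add_assoc, ← add_assoc]
  ring
end

section
/- For all integers m, i, r with 0 ≤ i ≤ m and r ≥ 0, Σ_{k=i}^{m} (−r−1)^{k−i} · C(k, i) · ⟦m+r+1, k+r+1⟧_{r+1} = ⟦m, i⟧, as an identity of integers, where C(a,b) is a binomial coefficient. -/
open Polynomial in
/-- The generating polynomial of the `s`-Stirling numbers is a shifted rising factorial. -/
theorem coeff_shifted (s m : ℕ) : ∀ k : ℕ,
    ((ascPochhammer ℤ m).comp (X + C (s : ℤ))).coeff k = rStirling1 s (m + s) (k + s) := by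
  induction m with
  | zero =>
    intro k
    cases s with
    | zero => simp [rStirling1, coeff_one]
    | succ s =>
      simp [rStirling1, coeff_one]
      omega
  | succ m ih =>
    intro k
    have e : (ascPochhammer ℤ (m+1)).comp (X + C (s : ℤ)) =
        (ascPochhammer ℤ m).comp (X + C (s : ℤ)) * X +
        (ascPochhammer ℤ m).comp (X + C (s : ℤ)) * C ((m + s : ℕ) : ℤ) := by
      rw [ascPochhammer_succ_right]
      simp
      ring
    have e2 : m + 1 + s = (m + s) + 1 := by ring
    rw [e, coeff_add, coeff_mul_C, ih, e2, rStirling1]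
    rw [if_neg (by omega), if_neg (by omega)]
    cases k with
    | zero =>
      rw [coeff_mul_X_zero]
      by_cases hs : s = 0
      · subst hs
        cases m with
        | zero => simp
        | succ m => simp [rStirling1]
      · have hz : rStirling1 s (m + s) (0 + s - 1) = 0 := by
          obtain ⟨t, rfl⟩ := Nat.exists_eq_succ_of_ne_zero hs
          rw [Nat.succ_eq_add_one, ← add_assoc, rStirling1, if_pos (by omega)]
        rw [if_neg (by omega), hz]
        push_cast
        ring
    | succ k =>
      rw [coeff_mul_X, ih, if_neg (by omega), show k + 1 + s - 1 = k + s by omega]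
      push_cast
      ring

open Polynomial in
theorem stmt16 (m i r : ℕ) (h : i ≤ m) :
    ∑ k ∈ Finset.Icc i m,
        (-(r : ℤ) - 1) ^ (k - i) * k.choose i * rStirling1 (r + 1) (m + r + 1) (k + r + 1) =
      stirling1 m i := by
  have h0 : (stirling1 m i : ℤ) = (ascPochhammer ℤ m).coeff i := by
    have := coeff_shifted 0 m i
    simpa [stirling1] using this.symm
  set P := (ascPochhammer ℤ m).comp (X + C ((r + 1 : ℕ) : ℤ)) with hP
  have hc : ascPochhammer ℤ m = P.comp (X + C (-(r : ℤ) - 1)) := by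
    rw [hP, comp_assoc]
    have : (X + C ((r + 1 : ℕ) : ℤ)).comp (X + C (-(r : ℤ) - 1)) = X := by
      simp
      ring
    rw [this, comp_X]
  have hd : P.natDegree < m + 1 := by
    have : P.natDegree ≤ _ := natDegree_comp_le
    rw [ascPochhammer_natDegree, natDegree_X_add_C] at this
    omega
  rw [h0, hc, comp, eval₂_eq_sum_range' C hd, finsetSum_coeff]
  symm
  rw [← Finset.sum_subset (s₁ := Finset.Icc i m)]
  · refine Finset.sum_congr rfl fun k _ => ?_
    rw [coeff_C_mul, coeff_X_add_C_pow, hP, coeff_shifted]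
    rw [← add_assoc, ← add_assoc]
    ring
  · intro k hk
    simp at hk ⊢
    omega
  · intro k hk hk'
    simp only [Finset.mem_range, Finset.mem_Icc] at hk hk'
    rw [coeff_C_mul, coeff_X_add_C_pow, Nat.choose_eq_zero_of_lt (by omega)]
    simp
end

section
/- For every integer m ≥ 1, Σ_{k=0}^{m} (−1)^{m−k} · (k+1)! · {m, k} · H_{k+1} = (m+2) · 2^{m−1}, where {n,k} denotes the Stirling number of the second kind and H_n is the n-th harmonic number. -/
/-- The Stirling numbers of the second kind. -/
def stirling2 : ℕ → ℕ → ℕ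
  | 0, k => if k = 0 then 1 else 0
  | (_+1), 0 => 0
  | (n+1), (k+1) => (k+1) * stirling2 n (k+1) + stirling2 n k

theorem stirling2_zero_of_lt : ∀ (n k : ℕ), n < k → stirling2 n k = 0
  | 0, k, h => by simp [stirling2]; omega
  | (n+1), 0, h => by omega
  | (n+1), (k+1), h => by
    rw [stirling2, stirling2_zero_of_lt n (k+1) (by omega), stirling2_zero_of_lt n k (by omega)]
    simp

/-- The alternating Stirling transform. -/
def altStirling (m : ℕ) (f : ℕ → ℚ) : ℚ :=
  ∑ k ∈ Finset.range (m + 1), (-1 : ℚ) ^ (m + k) * stirling2 m k * f k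

theorem altStirling_succ (m : ℕ) (f : ℕ → ℚ) :
    altStirling (m + 1) f = altStirling m (fun k => f (k + 1) - k * f k) := by
  unfold altStirling
  rw [Finset.sum_range_succ']
  have h1 : ∑ k ∈ Finset.range (m + 1),
      (-1 : ℚ) ^ (m + (k + 1)) * ((k + 1 : ℕ) : ℚ) * stirling2 m (k + 1) * f (k + 1)
      = ∑ k ∈ Finset.range (m + 1), (-1 : ℚ) ^ (m + k) * (k : ℚ) * stirling2 m k * f k := by
    have h2 := Finset.sum_range_succ'
      (fun k : ℕ => (-1 : ℚ) ^ (m + k) * (k : ℚ) * stirling2 m k * f k) (m + 1)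
    rw [Finset.sum_range_succ, stirling2_zero_of_lt m (m + 1) (by omega)] at h2
    simpa using h2.symm
  have h3 : (stirling2 (m + 1) 0 : ℚ) = 0 := by simp [stirling2]
  rw [h3]
  have h4 : ∀ k, (stirling2 (m + 1) (k + 1) : ℚ)
      = ((k + 1 : ℕ) : ℚ) * stirling2 m (k + 1) + stirling2 m k := by
    intro k
    rw [stirling2]
    push_cast
    ring
  have h5 : ∑ k ∈ Finset.range (m + 1),
      (-1 : ℚ) ^ (m + 1 + (k + 1)) * stirling2 (m + 1) (k + 1) * f (k + 1)
      = ∑ k ∈ Finset.range (m + 1), (-1 : ℚ) ^ (m + k) * stirling2 m k * f (k + 1)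
        - ∑ k ∈ Finset.range (m + 1),
      (-1 : ℚ) ^ (m + (k + 1)) * ((k + 1 : ℕ) : ℚ) * stirling2 m (k + 1) * f (k + 1) := by
    rw [← Finset.sum_sub_distrib]
    refine Finset.sum_congr rfl fun k _ => ?_
    rw [h4]
    ring
  rw [h5, h1, ← Finset.sum_sub_distrib]
  simp only [mul_zero, zero_mul, add_zero]
  refine Finset.sum_congr rfl fun k _ => ?_
  ring

theorem altStirling_lin (m : ℕ) (c : ℚ) (f g : ℕ → ℚ) :
    altStirling m (fun k => c * f k + g k) = c * altStirling m f + altStirling m g := by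
  unfold altStirling
  rw [Finset.mul_sum, ← Finset.sum_add_distrib]
  refine Finset.sum_congr rfl fun k _ => ?_
  ring

theorem altStirling_fact (m : ℕ) :
    altStirling m (fun k => ((k + 1).factorial : ℚ)) = 2 ^ m := by
  induction m with
  | zero => simp [altStirling, stirling2]
  | succ m ih =>
    rw [altStirling_succ]
    have h : (fun k : ℕ => ((k + 1 + 1).factorial : ℚ) - k * ((k + 1).factorial : ℚ))
        = fun k : ℕ => 1 * ((k + 1).factorial : ℚ) + ((k + 1).factorial : ℚ) := by
      funext k
      rw [Nat.factorial_succ (k + 1)]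
      push_cast
      ring
    rw [h, altStirling_lin, ih]
    ring

theorem altStirling_harm (m : ℕ) :
    altStirling m (fun k => ((k + 1).factorial : ℚ) * harmonic (k + 1)) = (m + 2) * 2 ^ m / 2 := by
  induction m with
  | zero => simp [altStirling, stirling2, harmonic]
  | succ m ih =>
    rw [altStirling_succ]
    have h : (fun k : ℕ => ((k + 1 + 1).factorial : ℚ) * harmonic (k + 1 + 1)
          - k * (((k + 1).factorial : ℚ) * harmonic (k + 1)))
        = fun k : ℕ => 2 * (((k + 1).factorial : ℚ) * harmonic (k + 1))
          + ((k + 1).factorial : ℚ) := by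
      funext k
      rw [harmonic_succ (k + 1), Nat.factorial_succ (k + 1)]
      have : ((k : ℚ) + 1 + 1) ≠ 0 := by positivity
      push_cast
      field_simp
      ring
    rw [h, altStirling_lin, ih, altStirling_fact]
    push_cast
    ring

theorem stmt17 (m : ℕ) (hm : 1 ≤ m) :
    ∑ k ∈ Finset.range (m + 1),
        (-1 : ℚ) ^ (m - k) * (k + 1).factorial * stirling2 m k * harmonic (k + 1) =
      (m + 2) * 2 ^ (m - 1) := by
  have h := altStirling_harm m
  have e : ((m : ℚ) + 2) * 2 ^ (m - 1) = (m + 2) * 2 ^ m / 2 := by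
    obtain ⟨n, rfl⟩ : ∃ n, m = n + 1 := ⟨m - 1, by omega⟩
    simp only [Nat.add_sub_cancel]
    ring
  rw [e, ← h]
  unfold altStirling
  refine Finset.sum_congr rfl fun k hk => ?_
  have hk' : k ≤ m := by
    have := Finset.mem_range.mp hk
    omega
  have s : (-1 : ℚ) ^ (m + k) = (-1) ^ (m - k) := by
    have : m + k = (m - k) + 2 * k := by omega
    rw [this, pow_add, pow_mul]
    simp
  rw [s]
  ring
end

section
/- For all integers m ≥ 0 and r ≥ 0, Σ_{k=0}^{m} (−1)^k · ⟦m+r+1, k+r+1⟧_{r+1} · B_k = (1/(m+1)) · ⟦m+r+2, r+2⟧_{r+1}, where B_k is the k-th Bernoulli number. -/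
open Polynomial in
/-- The umbral functional sending `X ^ k` to `bernoulli' k`. -/
noncomputable def umbralB : ℚ[X] →ₗ[ℚ] ℚ :=
  Polynomial.lsum (fun k => (bernoulli' k) • (LinearMap.id : ℚ →ₗ[ℚ] ℚ))

open Polynomial in
lemma umbralB_apply (p : ℚ[X]) : umbralB p = p.sum (fun k c => bernoulli' k * c) := by
  simp [umbralB, Polynomial.lsum_apply]

open Polynomial in
lemma umbralB_monomial (k : ℕ) (c : ℚ) : umbralB (monomial k c) = bernoulli' k * c := by
  rw [umbralB_apply, sum_monomial_index]
  simp

open Polynomial in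
lemma umbralB_X_sub_one_pow (n : ℕ) :
    umbralB ((X - 1) ^ n) = bernoulli' n - if n = 1 then 1 else 0 := by
  have h : ((X - 1 : ℚ[X]) ^ n) =
      ∑ k ∈ Finset.range (n + 1), monomial k ((-1 : ℚ) ^ (n - k) * (n.choose k : ℚ)) := by
    rw [sub_eq_add_neg, add_pow]
    refine Finset.sum_congr rfl fun k _ => ?_
    rw [← C_mul_X_pow_eq_monomial]
    simp
    ring
  rw [h, map_sum]
  have h2 : ∀ k ∈ Finset.range (n + 1),
      umbralB (monomial k ((-1 : ℚ) ^ (n - k) * (n.choose k : ℚ))) =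
      (-1) ^ n * ((n.choose k : ℚ) * _root_.bernoulli k) := by
    intro k hk
    have hk' : k ≤ n := by simpa [Nat.lt_succ_iff] using hk
    obtain ⟨d, rfl⟩ := Nat.exists_eq_add_of_le hk'
    rw [umbralB_monomial, bernoulli'_eq_bernoulli, pow_add]
    simp
    ring
  rw [Finset.sum_congr rfl h2, ← Finset.mul_sum, Finset.sum_range_succ, _root_.sum_bernoulli,
    bernoulli'_eq_bernoulli]
  by_cases hn : n = 1
  · subst hn; norm_num
  · simp [hn]

open Polynomial in
lemma umbralB_shift (p : ℚ[X]) :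
    umbralB p - umbralB (p.comp (X - 1)) = p.coeff 1 := by
  induction p using Polynomial.induction_on' with
  | add p q hp hq => rw [add_comp, map_add, map_add, coeff_add, ← hp, ← hq]; ring
  | monomial n c =>
    rw [monomial_comp, ← smul_eq_C_mul, map_smul, umbralB_X_sub_one_pow, umbralB_monomial,
      coeff_monomial, smul_eq_mul]
    split_ifs <;> ring

open Polynomial in
/-- The rising factorial `(X + a)(X + a + 1)⋯(X + a + m - 1)`. -/
noncomputable def risePoly (a : ℕ) : ℕ → ℚ[X]
  | 0 => 1
  | m + 1 => risePoly a m * (X + C ((m : ℚ) + a))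

open Polynomial in
lemma risePoly_comp (a m : ℕ) :
    (risePoly a (m + 1)).comp (X - 1) = (X + C ((a : ℚ) - 1)) * risePoly a m := by
  induction m with
  | zero => simp [risePoly]; ring
  | succ m ih =>
    rw [risePoly, mul_comp, ih, risePoly]
    simp
    ring

lemma rStirling1_zero_of_lt (a n k : ℕ) (h : k < a) : rStirling1 a n k = 0 := by
  cases n with
  | zero => rw [rStirling1]; simp; omega
  | succ n => rw [rStirling1]; simp [h]

open Polynomial in
lemma risePoly_coeff (r m k : ℕ) :
    (risePoly (r + 1) m).coeff k = rStirling1 (r + 1) (m + r + 1) (k + r + 1) := by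
  induction m generalizing k with
  | zero =>
    rw [rStirling1]
    simp [risePoly, coeff_one]
  | succ m ih =>
    rw [show m + 1 + r + 1 = (m + r + 1) + 1 by ring, rStirling1, if_neg (by omega),
      if_neg (by omega), if_neg (by omega), risePoly, mul_add, coeff_add, coeff_mul_C, ih]
    cases k with
    | zero =>
      rw [rStirling1_zero_of_lt _ _ (0 + r + 1 - 1) (by omega)]
      simp
      ring
    | succ k =>
      rw [coeff_mul_X, ih, show k + 1 + r + 1 - 1 = k + r + 1 by omega]
      push_cast
      ring

open Polynomial in
lemma risePoly_natDegree (a m : ℕ) : (risePoly a m).natDegree ≤ m := by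
  induction m with
  | zero => simp [risePoly]
  | succ m ih =>
    rw [risePoly]
    refine natDegree_mul_le.trans ?_
    rw [natDegree_X_add_C]
    omega

theorem stmt18 (m r : ℕ) :
    ∑ k ∈ Finset.range (m + 1),
        (-1 : ℚ) ^ k * rStirling1 (r + 1) (m + r + 1) (k + r + 1) * bernoulli k =
      (1 / (m + 1) : ℚ) * rStirling1 (r + 1) (m + r + 2) (r + 2) := by
  have h1 : ∑ k ∈ Finset.range (m + 1),
        (-1 : ℚ) ^ k * rStirling1 (r + 1) (m + r + 1) (k + r + 1) * bernoulli k =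
      umbralB (risePoly (r + 1) m) := by
    rw [umbralB_apply, Polynomial.sum_over_range' _ (by simp) (m + 1)
      (Nat.lt_succ_of_le (risePoly_natDegree _ _))]
    refine Finset.sum_congr rfl fun k _ => ?_
    rw [risePoly_coeff, bernoulli'_eq_bernoulli]
    ring
  have h2 := umbralB_shift (risePoly (r + 1) (m + 1))
  rw [risePoly_coeff, ← map_sub, risePoly_comp, risePoly,
    show risePoly (r + 1) m * (Polynomial.X + Polynomial.C ((m : ℚ) + (r + 1 : ℕ))) -
      (Polynomial.X + Polynomial.C (((r + 1 : ℕ) : ℚ) - 1)) * risePoly (r + 1) m =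
      ((m : ℚ) + 1) • risePoly (r + 1) m by
        rw [Polynomial.smul_eq_C_mul]; simp; ring, map_smul, smul_eq_mul,
    show m + 1 + r + 1 = m + r + 2 by ring, show 1 + r + 1 = r + 2 by ring] at h2
  rw [h1, ← h2]
  have : (m : ℚ) + 1 ≠ 0 := by positivity
  field_simp
end

section
/- For all integers l, q, r ≥ 0 and n ≥ l, Σ_{k=l}^{n} ⟦n+r, k+r⟧_r · C(k, l) · B_{k−l}(q+1) = ((l+1)/(n+1)) · ⟦n+q+r+1, l+q+r+1⟧_{q+r}, where B_j(x) denotes the j-th Bernoulli polynomial and C(a,b) is a binomial coefficient. -/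
open Polynomial in
/-- shifted rising factorial -/
noncomputable def risP (a : ℚ) (n : ℕ) : ℚ[X] := ∏ i ∈ Finset.range n, (X + C (a + i))

open Polynomial in
theorem risP_coeff (r n k : ℕ) : (rStirling1 r (n + r) (k + r) : ℚ) = (risP r n).coeff k := by
  induction n generalizing k with
  | zero =>
    rcases r with _ | r
    · simp [risP, rStirling1, Polynomial.coeff_one]
    · simp [risP, rStirling1, Polynomial.coeff_one]
      omega
  | succ n ih =>
    have e : n + 1 + r = (n + r) + 1 := by ring
    have hP : risP r (n+1) = risP r n * (X + C ((r:ℚ) + n)) := by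
      simp [risP, Finset.prod_range_succ]
    rw [e, hP, rStirling1, mul_add, coeff_add, coeff_mul_C]
    rw [if_neg (by omega), if_neg (by omega)]
    rcases k with _ | k
    · rw [mul_coeff_zero, coeff_X_zero, mul_zero, zero_add, ← ih 0]
      rcases r with _ | r
      · rcases n with _ | n
        · simp
        · simp [rStirling1]
      · have h0 : rStirling1 (r+1) (n + (r+1)) (r+1 - 1) = 0 := by
          rw [← add_assoc, rStirling1, if_pos (by omega)]
        rw [if_neg (by omega), zero_add, h0]
        simp only [zero_add]
        push_cast; ring
    · rw [coeff_mul_X, ← ih, ← ih, if_neg (by omega), show k + 1 + r - 1 = k + r by omega]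
      push_cast; ring

open Polynomial in
theorem risP_taylor (a c : ℚ) (n : ℕ) : taylor c (risP a n) = risP (a + c) n := by
  simp only [risP, taylor_apply, Polynomial.prod_comp]
  refine Finset.prod_congr rfl fun i _ => ?_
  simp; ring

open Polynomial in
theorem risP_diff (a : ℚ) (n : ℕ) :
    taylor 1 (risP a (n+1)) - risP a (n+1) = C ((n:ℚ)+1) * risP (a+1) n := by
  rw [risP_taylor]
  have h1 : risP (a+1) (n+1) = risP (a+1) n * (X + C (a + 1 + n)) := by
    simp [risP, Finset.prod_range_succ]
  have h2 : risP a (n+1) = risP (a+1) n * (X + C a) := by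
    simp only [risP, Finset.prod_range_succ']
    simp only [Nat.cast_add, Nat.cast_one, Nat.cast_zero, add_zero]
    congr 1
    refine Finset.prod_congr rfl fun i _ => ?_
    rw [add_assoc a 1, add_comm (1:ℚ)]
  rw [h1, h2]
  simp; ring

open Polynomial in
/-- The operator sending `X^k` to the Bernoulli polynomial. -/
noncomputable def bernL : ℚ[X] →ₗ[ℚ] ℚ[X] :=
  Polynomial.lsum (fun k => LinearMap.toSpanSingleton ℚ ℚ[X] (Polynomial.bernoulli k))

open Polynomial in
theorem bernL_monomial (k : ℕ) (a : ℚ) : bernL (monomial k a) = a • Polynomial.bernoulli k := by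
  simp [bernL, Polynomial.lsum_apply]

open Polynomial in
theorem bernL_diff (p : ℚ[X]) : bernL (taylor 1 p - p) = derivative p := by
  induction p using Polynomial.induction_on' with
  | add p q hp hq =>
    rw [map_add (taylor 1), derivative_add, ← hp, ← hq, ← map_add bernL]
    congr 1; ring
  | monomial k a =>
    have h : taylor 1 (monomial k a) - monomial k a
        = ∑ i ∈ Finset.range k, monomial i (a * (k.choose i : ℚ)) := by
      rw [taylor_monomial, C_1, add_pow, Finset.sum_range_succ, mul_add, Finset.mul_sum]
      simp only [one_pow, mul_one, Nat.choose_self, Nat.cast_one, C_mul_X_pow_eq_monomial,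
        add_sub_cancel_right]
      refine Finset.sum_congr rfl fun i _ => ?_
      rw [← C_mul_X_pow_eq_monomial, C_mul]
      simp; ring
    rw [h, map_sum]
    simp only [bernL_monomial, mul_smul]
    rw [← Finset.smul_sum]
    rcases k with _ | k
    · simp
    · have := Polynomial.sum_bernoulli k
      rw [this, derivative_monomial]
      rw [smul_monomial]
      simp only [smul_eq_mul, Nat.cast_add, Nat.cast_one, Nat.add_sub_cancel]

open Polynomial in
theorem hasse_bern (k l : ℕ) (h : l ≤ k) :
    hasseDeriv l (Polynomial.bernoulli k) = (k.choose l : ℚ) • Polynomial.bernoulli (k - l) := by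
  ext i
  rw [hasseDeriv_coeff, coeff_smul, coeff_bernoulli, coeff_bernoulli]
  by_cases hi : i + l ≤ k
  · have hc := Nat.choose_mul (n := k) (k := i + l) (s := l) (by omega)
    rw [Nat.add_sub_cancel] at hc
    have hc' : (k.choose (i+l) : ℚ) * ((i+l).choose l) = k.choose l * (k-l).choose i := by
      exact_mod_cast hc
    rw [if_pos hi, if_pos (by omega), show k - l - i = k - (i + l) by omega, smul_eq_mul]
    linear_combination (_root_.bernoulli (k - (i+l))) * hc'
  · rw [if_neg hi, if_neg (by omega)]; simp

open Polynomial in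
theorem hasse_bern_zero (k l : ℕ) (h : k < l) :
    hasseDeriv l (Polynomial.bernoulli k) = 0 := by
  ext i
  rw [hasseDeriv_coeff, coeff_bernoulli, if_neg (by omega)]; simp

open Polynomial in
theorem stmt19_aux (l q r n : ℕ) (h : l ≤ n) :
    ∑ k ∈ Finset.Icc l n,
        (rStirling1 r (n + r) (k + r) : ℚ) * k.choose l *
          (Polynomial.bernoulli (k - l)).eval ((q : ℚ) + 1) =
      ((l + 1) / (n + 1) : ℚ) * rStirling1 (q + r) (n + q + r + 1) (l + q + r + 1) := by
  have hn : (n:ℚ) + 1 ≠ 0 := by positivity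
  have hdeg : (risP r n).natDegree < n + 1 := by
    have : (risP r n).natDegree ≤ ∑ i ∈ Finset.range n, (X + C ((r:ℚ) + i)).natDegree :=
      natDegree_prod_le _ _
    simp only [natDegree_X_add_C] at this
    simp at this
    omega
  have hL : (n + 1 : ℚ) • bernL (risP r n) = derivative (risP (r-1) (n+1)) := by
    rw [← bernL_diff, risP_diff, ← map_smul, sub_add_cancel, smul_eq_C_mul]
  have hs : bernL (risP r n)
      = ∑ k ∈ Finset.range (n+1), (risP r n).coeff k • Polynomial.bernoulli k := by
    conv_lhs => rw [as_sum_range' (risP r n) (n+1) hdeg]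
    rw [map_sum]
    simp only [bernL_monomial]
  have hl : ∑ k ∈ Finset.Icc l n,
        (rStirling1 r (n + r) (k + r) : ℚ) * k.choose l *
          (Polynomial.bernoulli (k - l)).eval ((q : ℚ) + 1)
      = (hasseDeriv l (bernL (risP r n))).eval ((q:ℚ)+1) := by
    rw [hs, map_sum, eval_finsetSum]
    rw [← Finset.sum_subset (s₁ := Finset.Icc l n) (s₂ := Finset.range (n+1))]
    · refine Finset.sum_congr rfl fun k hk => ?_
      rw [Finset.mem_Icc] at hk
      rw [map_smul, hasse_bern k l hk.1, risP_coeff]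
      simp; ring
    · intro k hk; simp at hk ⊢; omega
    · intro k hk hk'
      simp at hk hk'
      rw [map_smul, hasse_bern_zero k l (by by_contra hh; have := hk' (by omega); omega)]
      simp
  have hr : (rStirling1 (q + r) (n + q + r + 1) (l + q + r + 1) : ℚ)
      = (risP (q + r) (n+1)).coeff (l+1) := by
    have := risP_coeff (q+r) (n+1) (l+1)
    push_cast at this
    rw [← this]
    congr 2 <;> ring
  have hd : (n + 1 : ℚ) * (hasseDeriv l (bernL (risP r n))).eval ((q:ℚ)+1)
      = (l+1) * (risP (q + r) (n+1)).coeff (l+1) := by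
    have : (taylor ((q:ℚ)+1) (derivative (risP (r-1) (n+1)))) 
        = derivative (risP (q+r) (n+1)) := by
      rw [show (q:ℚ) + r = (r - 1) + (q+1) by ring, ← risP_taylor, taylor_apply, taylor_apply,
        derivative_comp]
      simp
    rw [← smul_eq_mul, ← eval_smul, ← map_smul, hL, ← taylor_coeff, this, coeff_derivative]
    ring
  rw [hl, hr]
  field_simp
  linear_combination hd

theorem stmt19 (l q r n : ℕ) (h : l ≤ n) :
    ∑ k ∈ Finset.Icc l n,
        (rStirling1 r (n + r) (k + r) : ℚ) * k.choose l *
          (Polynomial.bernoulli (k - l)).eval ((q : ℚ) + 1) =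
      ((l + 1) / (n + 1) : ℚ) * rStirling1 (q + r) (n + q + r + 1) (l + q + r + 1) :=
  by exact stmt19_aux l q r n h
end
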